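/- For n ≥ 2 and any I ⊆ [n-1], |n·β^cyc_n(I) - β_n(I)| ≤ (n/2)·⌊n/2⌋!. -/

import Mathlib

/-!
The proof follows the word model of Gessel and Reutenauer. Cut the positions `0, …, n-1` into blocks
of consecutive positions, a new block starting at each `t ∈ J`, and let `blk J i` be the index of
the block of `i`. A permutation has all its descents in `J` iff it increases on each block
(`descSet_subset_iff`). Let `words n J` be the set of rearrangements of the word `blk J 0, blk J 1, …`.

* Stable sorting gives `alphaP n J = #(words n J)` (`alphaP_eq_card_words`).
* An `n`-cycle `π` with descents in `J` and a marked point `x` give the word `i ↦ blk J (π^i x)`.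
  The points are ordered like the lexicographic order of their itineraries (`itin_strictMono`), so
  the word is primitive and determines `(π, x)`. Conversely a primitive word arises by sorting its
  `n` distinct rotations lexicographically (`exists_orbitWord_eq`). Hence `n * alphaC n J` is the
  number of primitive elements of `words n J`.
* Words in `words n J` of period `n / d` exist only if `d` divides every element of `J`, and are then
  the `d`-fold repetitions of `words (n / d) (divSet J d)` (`card_periodic_words`). Möbius inversion
  yields `n * alphaC n J = ∑ μ(d) * alphaP (n / d) (divSet J d)`, the sum being over those `d ∣ n`
  dividing every element of `J` (`n_mul_alphaC_eq_sum`).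

Inclusion–exclusion over `J ⊆ I` turns the left side into `n * betaC n I`. On the right the divisor
`d = 1` gives `betaP n I`, and any other `d` gives, up to sign, the number of permutations of
`[n / d]` with a prescribed descent set (`abs_sum_le`), hence at most `⌊n/2⌋!` in absolute value.
There are at most `⌊n/2⌋` divisors `d > 1` of `n`.
-/

open Finset

/-- The value `π(i)` of a permutation of `[n]`, in 1-based position notation. -/
def permVal {n : ℕ} (π : Equiv.Perm (Fin n)) (i : ℕ) : ℕ :=
  if h : i - 1 < n then ((π ⟨i - 1, h⟩ : Fin n) : ℕ) else 0

/-- The descent set `D(π) = {i ∈ [n-1] : π(i) > π(i+1)}` (1-based). -/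
def descSet {n : ℕ} (π : Equiv.Perm (Fin n)) : Finset ℕ :=
  (Finset.Ioo 0 n).filter fun i => permVal π (i + 1) < permVal π i

/-- `π` is an `n`-cycle: a permutation of `[n]` consisting of a single cycle of length `n`. -/
def IsFullCycle {n : ℕ} (π : Equiv.Perm (Fin n)) : Prop :=
  ∀ x y : Fin n, ∃ k : ℕ, (π ^ k) x = y

/-- `α_n(I)`: number of permutations of `[n]` with descent set contained in `I`. -/
noncomputable def alphaP (n : ℕ) (I : Finset ℕ) : ℕ :=
  Nat.card {π : Equiv.Perm (Fin n) // descSet π ⊆ I}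

/-- `α^cyc_n(I)`: number of `n`-cycles with descent set contained in `I`. -/
noncomputable def alphaC (n : ℕ) (I : Finset ℕ) : ℕ :=
  Nat.card {π : Equiv.Perm (Fin n) // IsFullCycle π ∧ descSet π ⊆ I}

/-- `β_n(I)`: number of permutations of `[n]` with descent set exactly `I`. -/
noncomputable def betaP (n : ℕ) (I : Finset ℕ) : ℕ :=
  Nat.card {π : Equiv.Perm (Fin n) // descSet π = I}

/-- `β^cyc_n(I)`: number of `n`-cycles with descent set exactly `I`. -/
noncomputable def betaC (n : ℕ) (I : Finset ℕ) : ℕ :=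
  Nat.card {π : Equiv.Perm (Fin n) // IsFullCycle π ∧ descSet π = I}

/-- `I/d = {i/d : i ∈ I, d ∣ i}`. -/
def divSet (I : Finset ℕ) (d : ℕ) : Finset ℕ :=
  (I.filter fun i => d ∣ i).image (· / d)

/-! ### Blocks and rearrangements -/

/-- The index of the block containing position `i` (0-based). -/
def blk (J : Finset ℕ) (i : ℕ) : ℕ := #{t ∈ J | t ≤ i}

theorem blk_mono (J : Finset ℕ) : Monotone (blk J) := fun _ _ h =>
  card_le_card fun t ht => by
    simp only [mem_filter] at ht ⊢
    exact ⟨ht.1, ht.2.trans h⟩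

theorem blk_lt {J : Finset ℕ} {i t : ℕ} (ht : t ∈ J) (h : i < t) : blk J i < blk J t :=
  card_lt_card (by
    refine ⟨fun s hs => ?_, fun hs => ?_⟩
    · simp only [mem_filter] at hs ⊢
      exact ⟨hs.1, hs.2.trans h.le⟩
    · have := hs (mem_filter.2 ⟨ht, le_rfl⟩)
      simp only [mem_filter] at this
      omega)

theorem blk_succ {J : Finset ℕ} {i : ℕ} (ht : i + 1 ∉ J) : blk J (i + 1) = blk J i := by
  unfold blk
  congr 1
  ext s
  simp only [mem_filter]
  constructor
  · rintro ⟨h1, h2⟩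
    refine ⟨h1, ?_⟩
    rcases Nat.lt_or_ge i s with h | h
    · have : s = i + 1 := by omega
      exact absurd (this ▸ h1) ht
    · exact h
  · rintro ⟨h1, h2⟩
    exact ⟨h1, by omega⟩

theorem descSet_subset_iff {n : ℕ} (π : Equiv.Perm (Fin n)) (J : Finset ℕ) :
    descSet π ⊆ J ↔ ∀ i j : Fin n, blk J i = blk J j → i < j → π i < π j := by
  constructor
  · rintro h ⟨i, hi⟩ ⟨j, hj⟩ hb hij
    simp only [Fin.mk_lt_mk] at hij
    simp only at hb
    induction j, hij using Nat.le_induction with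
    | base =>
      have hnot : i + 1 ∉ J := fun hm => (blk_lt hm (Nat.lt_succ_self i)).ne hb
      have h2 : i + 1 ∉ descSet π := fun hm => hnot (h hm)
      simp only [descSet, permVal, mem_filter, mem_Ioo, Nat.add_sub_cancel] at h2
      rw [dif_pos hj, dif_pos hi] at h2
      have h3 : π ⟨i, hi⟩ ≠ π ⟨i + 1, hj⟩ := by simp
      have h4 : ¬ (π ⟨i + 1, hj⟩ : ℕ) < π ⟨i, hi⟩ := fun h5 => h2 ⟨⟨by omega, by omega⟩, h5⟩
      exact lt_of_le_of_ne (not_lt.1 h4) h3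
    | succ j hij ih =>
      have hj' : j < n := by omega
      have hb1 : blk J i ≤ blk J j := blk_mono J (by omega)
      have hb2 : blk J j ≤ blk J (j + 1) := blk_mono J (by omega)
      refine (ih hj' (by omega)).trans ?_
      have hnot : j + 1 ∉ J := fun hm => (blk_lt hm (Nat.lt_succ_self j)).ne (by omega)
      have h2 : j + 1 ∉ descSet π := fun hm => hnot (h hm)
      simp only [descSet, permVal, mem_filter, mem_Ioo, Nat.add_sub_cancel] at h2
      rw [dif_pos hj, dif_pos hj'] at h2
      have h3 : π ⟨j, hj'⟩ ≠ π ⟨j + 1, hj⟩ := by simp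
      have h4 : ¬ (π ⟨j + 1, hj⟩ : ℕ) < π ⟨j, hj'⟩ := fun h5 => h2 ⟨⟨by omega, by omega⟩, h5⟩
      exact lt_of_le_of_ne (not_lt.1 h4) h3
  · intro h t ht
    rw [descSet, mem_filter, mem_Ioo] at ht
    obtain ⟨⟨h0, hn⟩, hlt⟩ := ht
    by_contra hJ
    unfold permVal at hlt
    obtain ⟨i, rfl⟩ : ∃ i, t = i + 1 := ⟨t - 1, by omega⟩
    simp only [Nat.add_sub_cancel] at hlt
    rw [dif_pos hn, dif_pos (by omega)] at hlt
    have := h ⟨i, by omega⟩ ⟨i + 1, hn⟩ (blk_succ hJ).symm (by simp)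
    exact absurd hlt (not_lt.2 (Fin.le_def.1 this.le))

/-- The words of length `n` whose content is that of the block-index word of `J`, i.e. its
rearrangements. -/
def words (n : ℕ) (J : Finset ℕ) : Finset (Fin n → ℕ) :=
  univ.image fun (τ : Equiv.Perm (Fin n)) (i : Fin n) => blk J (τ i)

theorem mem_words {n : ℕ} {J : Finset ℕ} {w : Fin n → ℕ} :
    w ∈ words n J ↔ ∃ τ : Equiv.Perm (Fin n), ∀ i, w i = blk J (τ i) := by
  simp only [words, mem_image, mem_univ, true_and, funext_iff, eq_comm]

/-- If `σ` sorts a rearrangement `w` of the block-index word, then the sorted word is the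
block-index word itself. -/
theorem eq_blk_of_sorts {n : ℕ} {J : Finset ℕ} {w : Fin n → ℕ} (hw : w ∈ words n J)
    (σ : Equiv.Perm (Fin n)) (h : Monotone fun i => w (σ.symm i)) (i : Fin n) :
    blk J (σ i) = w i := by
  obtain ⟨τ, hτ⟩ := mem_words.1 hw
  have := Tuple.unique_monotone (f := fun i : Fin n => blk J i) (σ := 1) (τ := σ.symm.trans τ)
    (fun a b hab => blk_mono J hab) (fun a b hab => by
      simpa [← hτ] using h hab)
  have := congrFun this (σ i)
  simpa [← hτ] using this

/-- The bijection sends a permutation `π` with descents in `J` to the word `blk J ∘ π⁻¹`; its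
inverse is stable sorting. -/
theorem alphaP_eq_card_words (m : ℕ) (J : Finset ℕ) : alphaP m J = #(words m J) := by
  rw [alphaP, ← Nat.card_eq_finsetCard]
  refine Nat.card_eq_of_bijective
    (fun π => (⟨fun i => blk J (π.1.symm i), mem_words.2 ⟨π.1.symm, fun _ => rfl⟩⟩ :
      words m J)) ⟨?_, ?_⟩
  · rintro ⟨π, hπ⟩ ⟨ρ, hρ⟩ h
    rw [descSet_subset_iff] at hπ hρ
    simp only [Subtype.mk.injEq, funext_iff] at h ⊢
    have key : ∀ π : Equiv.Perm (Fin m),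
        (∀ i j : Fin m, blk J i = blk J j → i < j → π i < π j) →
        π = Tuple.sort fun i => blk J (π.symm i) := by
      intro π hπ
      rw [Tuple.eq_sort_iff]
      refine ⟨fun a b hab => by simpa using blk_mono J hab, fun i j hij h => ?_⟩
      simp only [Equiv.symm_apply_apply] at h
      exact hπ i j h hij
    rw [key π hπ, key ρ hρ]
    congr 1
    funext i
    exact h i
  · rintro ⟨w, hw⟩
    have hw : w ∈ words m J := hw
    obtain ⟨hm, hs⟩ := (Tuple.eq_sort_iff (f := w) (σ := Tuple.sort w)).1 rfl
    have hb := eq_blk_of_sorts hw (Tuple.sort w).symm hm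
    refine ⟨⟨Tuple.sort w, ?_⟩, ?_⟩
    · rw [descSet_subset_iff]
      intro i j h hij
      refine hs i j hij ?_
      rw [← hb, ← hb]
      simpa using h
    · simp only [Subtype.mk.injEq]
      funext i
      exact hb i

/-! ### Periods of words -/

/-- The `n`-periodic infinite sequence obtained by repeating the word `w`. -/
def rep {n : ℕ} [NeZero n] (w : Fin n → ℕ) (t : ℕ) : ℕ := w (Fin.ofNat n t)

/-- The shift on infinite sequences. -/
def shift (W : ℕ → ℕ) (t : ℕ) : ℕ := W (t + 1)

theorem shift_iterate (W : ℕ → ℕ) (p t : ℕ) : shift^[p] W t = W (t + p) := by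
  induction p generalizing t with
  | zero => rfl
  | succ p ih =>
    rw [Function.iterate_succ_apply', shift, ih]
    congr 1
    omega

theorem isPeriodicPt_iff (W : ℕ → ℕ) (p : ℕ) :
    Function.IsPeriodicPt shift p W ↔ ∀ t, W (t + p) = W t := by
  simp only [Function.IsPeriodicPt, Function.IsFixedPt, funext_iff, shift_iterate]

theorem rep_periodic {n : ℕ} [NeZero n] (w : Fin n → ℕ) :
    Function.IsPeriodicPt shift n (rep w) := by
  rw [isPeriodicPt_iff]
  intro t
  unfold rep
  congr 1
  ext
  simp

open Classical in
/-- Möbius inversion over the divisors of `n` singles out the words of primitive period `n`. -/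
theorem sum_moebius_periodic {n : ℕ} [NeZero n] (w : Fin n → ℕ) :
    ∑ d ∈ n.divisors, (ArithmeticFunction.moebius d *
      if Function.IsPeriodicPt shift (n / d) (rep w) then 1 else 0) =
    if Function.minimalPeriod shift (rep w) = n then 1 else 0 := by
  have hn : n ≠ 0 := NeZero.ne n
  obtain ⟨q, hq⟩ := (rep_periodic w).minimalPeriod_dvd
  set p := Function.minimalPeriod shift (rep w) with hp
  have hq0 : q ≠ 0 := by rintro rfl; simp at hq; exact hn hq
  have hp0 : p ≠ 0 := by intro h0; rw [h0] at hq; simp at hq; exact hn hq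
  have h1 : ∀ d ∈ n.divisors, (Function.IsPeriodicPt shift (n / d) (rep w) ↔ d ∣ q) := by
    intro d hd
    rw [Function.isPeriodicPt_iff_minimalPeriod_dvd, ← hp]
    have hd := (Nat.mem_divisors.1 hd).1
    have hd0 : 0 < d := Nat.pos_of_dvd_of_pos hd (Nat.pos_of_ne_zero hn)
    rw [Nat.dvd_div_iff_mul_dvd hd, mul_comm, hq]
    exact Nat.mul_dvd_mul_iff_left (Nat.pos_of_ne_zero hp0)
  have h2 := congrArg (fun g => g q) ArithmeticFunction.moebius_mul_coe_zeta
  simp only [ArithmeticFunction.coe_mul_zeta_apply,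
    ArithmeticFunction.one_apply] at h2
  have h3 : p = n ↔ q = 1 := by
    rw [hq]
    constructor
    · intro h
      exact Nat.eq_of_mul_eq_mul_left (Nat.pos_of_ne_zero hp0) (by omega)
    · rintro rfl
      simp
  simp only [h3]
  rw [← h2]
  simp only [mul_ite, mul_one, mul_zero]
  rw [← sum_filter]
  refine sum_congr ?_ fun _ _ => rfl
  ext d
  simp only [mem_filter, Nat.mem_divisors]
  constructor
  · rintro ⟨h, h'⟩
    exact ⟨(h1 d (Nat.mem_divisors.2 h)).1 h', hq0⟩
  · rintro ⟨h, -⟩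
    have : d ∣ n ∧ n ≠ 0 := ⟨hq ▸ h.mul_left p, hn⟩
    exact ⟨this, (h1 d (Nat.mem_divisors.2 this)).2 h⟩

/-! ### Full cycles and primitive words -/

theorem IsFullCycle.orderOf_eq {n : ℕ} (hn : 2 ≤ n) {π : Equiv.Perm (Fin n)}
    (h : IsFullCycle π) : orderOf π = n := by
  have hmove : ∀ x, π x ≠ x := by
    intro x hx
    have : Nontrivial (Fin n) := Fin.nontrivial_iff_two_le.2 hn
    obtain ⟨y, hy⟩ := exists_ne x
    obtain ⟨k, hk⟩ := h x y
    exact hy (hk ▸ Equiv.Perm.pow_apply_eq_self_of_apply_eq_self hx k)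
  have hc : π.IsCycle := ⟨⟨0, by omega⟩, hmove _, fun y _ => by
    obtain ⟨k, hk⟩ := h ⟨0, by omega⟩ y
    exact ⟨k, by simpa using hk⟩⟩
  rw [hc.orderOf]
  have : π.support = univ := by
    ext x
    simp [hmove x]
  simp [this]

theorem IsFullCycle.exists_lt {n : ℕ} (hn : 2 ≤ n) {π : Equiv.Perm (Fin n)}
    (h : IsFullCycle π) (x y : Fin n) : ∃ k < n, (π ^ k) x = y := by
  obtain ⟨k, hk⟩ := h x y
  refine ⟨k % n, Nat.mod_lt _ (by omega), ?_⟩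
  have := pow_mod_orderOf π k
  rw [h.orderOf_eq hn] at this
  rw [this, hk]

/-- The map `i ↦ π^i x` as a bijection, for an `n`-cycle `π`. -/
theorem IsFullCycle.bijective {n : ℕ} (hn : 2 ≤ n) {π : Equiv.Perm (Fin n)}
    (h : IsFullCycle π) (x : Fin n) : Function.Bijective fun i : Fin n => (π ^ (i : ℕ)) x :=
  Finite.injective_iff_bijective.1 <| Finite.injective_iff_surjective.2 fun y => by
    obtain ⟨k, hk, e⟩ := h.exists_lt hn x y
    exact ⟨⟨k, hk⟩, e⟩

/-- The itinerary of `x` under `π`: the sequence of blocks visited by `x, π x, π² x, …`. -/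
def itin {n : ℕ} (J : Finset ℕ) (π : Equiv.Perm (Fin n)) (x : Fin n) : Lex (ℕ → ℕ) :=
  toLex fun t => blk J ((π ^ t) x)

theorem lex_lt_iff (a b : Lex (ℕ → ℕ)) :
    a < b ↔ ∃ t, (∀ s < t, ofLex a s = ofLex b s) ∧ ofLex a t < ofLex b t := Iff.rfl

/-- For an `n`-cycle with all descents in `J`, the order of the points is the lexicographic order
of their itineraries. -/
theorem itin_strictMono {n : ℕ} {J : Finset ℕ} {π : Equiv.Perm (Fin n)}
    (h : IsFullCycle π) (hd : descSet π ⊆ J) : StrictMono (itin J π) := by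
  rw [descSet_subset_iff] at hd
  intro u v huv
  have step : ∀ t, (∀ s < t, blk J ((π ^ s) u) = blk J ((π ^ s) v)) →
      (π ^ t) u < (π ^ t) v := by
    intro t
    induction t with
    | zero => intro _; simpa using huv
    | succ t ih =>
      intro hs
      rw [pow_succ', Equiv.Perm.mul_apply, Equiv.Perm.mul_apply]
      exact hd _ _ (hs t (by omega)) (ih fun s hst => hs s (by omega))
  by_cases hex : ∃ t, blk J ((π ^ t) u) ≠ blk J ((π ^ t) v)
  · refine (lex_lt_iff _ _).2 ⟨Nat.find hex, fun s hs => not_not.1 (Nat.find_min hex hs), ?_⟩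
    refine lt_of_le_of_ne (blk_mono J ?_) (Nat.find_spec hex)
    exact Fin.le_def.1 (step _ fun s hs => not_not.1 (Nat.find_min hex hs)).le
  · -- equal itineraries would make `u < π^k u < π^{2k} u < …` for the `k` with `π^k u = v`
    push Not at hex
    exfalso
    obtain ⟨k, rfl⟩ := h u v
    have hm : StrictMono fun s : ℕ => (π ^ (s * k)) u := strictMono_nat_of_lt_succ fun s => by
      have := step (s * k) fun s _ => hex s
      rwa [← Equiv.Perm.mul_apply, ← pow_add, ← Nat.succ_mul] at this
    exact not_injective_infinite_finite _ hm.injective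

/-- A permutation is determined by the order it induces, as `Fin n` has no nontrivial order
automorphism. -/
theorem perm_eq_of_lt_iff {n : ℕ} (σ τ : Equiv.Perm (Fin n))
    (h : ∀ i j, σ i < σ j ↔ τ i < τ j) : σ = τ := by
  have e : StrictMono (σ.symm.trans τ) := fun a b hab => by
    simpa [← h] using hab
  have := (e.range_inj (strictMono_id (α := Fin n))).1 (by
    rw [(σ.symm.trans τ).surjective.range_eq]; simp)
  ext i
  have := congrFun this (σ i)
  simp at this
  rw [this]

/-- The word `i ↦ blk (π^i x)` attached to a permutation with a marked point. -/
def orbitWord {n : ℕ} (J : Finset ℕ) (π : Equiv.Perm (Fin n)) (x : Fin n) (i : Fin n) : ℕ :=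
  blk J ((π ^ (i : ℕ)) x)

theorem rep_orbitWord {n : ℕ} [NeZero n] (hn : 2 ≤ n) {J : Finset ℕ} {π : Equiv.Perm (Fin n)}
    (h : IsFullCycle π) (x : Fin n) :
    rep (orbitWord J π x) = fun t => blk J ((π ^ t) x) := by
  funext t
  have := pow_mod_orderOf π t
  rw [h.orderOf_eq hn] at this
  rw [rep, orbitWord, Fin.val_ofNat, this]

/-- A period `0 < p < n` would give `x` and `π^p x ≠ x` the same itinerary. -/
theorem orbitWord_primitive {n : ℕ} [NeZero n] (hn : 2 ≤ n) {J : Finset ℕ}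
    {π : Equiv.Perm (Fin n)} (h : IsFullCycle π) (hd : descSet π ⊆ J) (x : Fin n) :
    Function.minimalPeriod shift (rep (orbitWord J π x)) = n := by
  set p := Function.minimalPeriod shift (rep (orbitWord J π x)) with hp
  have hdvd : p ∣ n := (rep_periodic _).minimalPeriod_dvd
  have hp0 : 0 < p := Nat.pos_of_dvd_of_pos hdvd (by omega)
  rcases (Nat.le_of_dvd (by omega) hdvd).lt_or_eq with hlt | he
  · exfalso
    have hper := (isPeriodicPt_iff _ _).1
      (Function.isPeriodicPt_minimalPeriod shift (rep (orbitWord J π x)))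
    rw [← hp, rep_orbitWord hn h] at hper
    have h1 : (π ^ p) x = x := (itin_strictMono h hd).injective <| congrArg toLex <| by
      funext t
      have := hper t
      simp only at this
      rw [← this, pow_add, Equiv.Perm.mul_apply]
    have h2 := @(h.bijective hn x).1 ⟨p, hlt⟩ ⟨0, by omega⟩ (by simpa using h1)
    simp at h2
    omega
  · exact he

/-- The word determines the itineraries of the points `π^i x`, hence their relative order, hence
the points themselves. -/
theorem orbitWord_injective {n : ℕ} [NeZero n] (hn : 2 ≤ n) {J : Finset ℕ}
    {π ρ : Equiv.Perm (Fin n)} (hπ : IsFullCycle π) (hdπ : descSet π ⊆ J)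
    (hρ : IsFullCycle ρ) (hdρ : descSet ρ ⊆ J) {x y : Fin n}
    (h : orbitWord J π x = orbitWord J ρ y) : π = ρ ∧ x = y := by
  have hW : (fun t => blk J ((π ^ t) x)) = fun t => blk J ((ρ ^ t) y) := by
    rw [← rep_orbitWord hn hπ, ← rep_orbitWord hn hρ, h]
  have hit : ∀ i : ℕ, itin J π ((π ^ i) x) = itin J ρ ((ρ ^ i) y) := by
    intro i
    refine congrArg toLex ?_
    funext t
    rw [← Equiv.Perm.mul_apply, ← pow_add, ← Equiv.Perm.mul_apply, ← pow_add]
    exact congrFun hW _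
  have hσ := perm_eq_of_lt_iff (Equiv.ofBijective _ (hπ.bijective hn x))
    (Equiv.ofBijective _ (hρ.bijective hn y)) (by
      intro i j
      simp only [Equiv.ofBijective_apply]
      rw [← (itin_strictMono hπ hdπ).lt_iff_lt, ← (itin_strictMono hρ hdρ).lt_iff_lt, hit, hit])
  have hpt : ∀ i < n, (π ^ i) x = (ρ ^ i) y := fun i hi => by
    simpa using congrArg (fun e : Equiv.Perm (Fin n) => e ⟨i, hi⟩) hσ
  have hpt' : ∀ i, (π ^ i) x = (ρ ^ i) y := fun i => by
    have h1 := pow_mod_orderOf π i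
    have h2 := pow_mod_orderOf ρ i
    rw [hπ.orderOf_eq hn] at h1
    rw [hρ.orderOf_eq hn] at h2
    rw [← h1, ← h2]
    exact hpt _ (Nat.mod_lt _ (by omega))
  refine ⟨?_, by simpa using hpt 0 (by omega)⟩
  ext z
  obtain ⟨k, rfl⟩ := hπ x z
  rw [← Equiv.Perm.mul_apply, ← pow_succ', hpt', hpt', ← Equiv.Perm.mul_apply, ← pow_succ']

theorem orbitWord_mem_words {n : ℕ} (hn : 2 ≤ n) {J : Finset ℕ}
    {π : Equiv.Perm (Fin n)} (h : IsFullCycle π) (x : Fin n) : orbitWord J π x ∈ words n J :=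
  mem_words.2 ⟨Equiv.ofBijective _ (h.bijective hn x), fun _ => rfl⟩

/-- Every primitive rearrangement of the block-index word comes from an `n`-cycle: sort the
rotations of `w` lexicographically and let `π` shift rotations. -/
theorem exists_orbitWord_eq {n : ℕ} [NeZero n] {J : Finset ℕ} {w : Fin n → ℕ}
    (hw : w ∈ words n J) (hp : Function.minimalPeriod shift (rep w) = n) :
    ∃ π : Equiv.Perm (Fin n), ∃ x, IsFullCycle π ∧ descSet π ⊆ J ∧ orbitWord J π x = w := by
  have hn0 : 0 < n := Nat.pos_of_ne_zero (NeZero.ne n)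
  set L : Fin n → Lex (ℕ → ℕ) := fun i => toLex (shift^[i] (rep w)) with hL
  have hLapp : ∀ i t, ofLex (L i) t = rep w (t + i) := fun i t => shift_iterate _ _ _
  have hrep : ∀ i : Fin n, rep w i = w i := fun i => by simp [rep]
  have hmod : ∀ t, rep w (t % n) = rep w t := fun t => by
    unfold rep
    congr 1
    ext
    simp
  have hinj : Function.Injective L := fun i j hij => Fin.ext <|
    Function.iterate_injOn_Iio_minimalPeriod (f := shift) (x := rep w)
      (by simp [hp]) (by simp [hp]) (toLex.injective hij)
  set σ : Equiv.Perm (Fin n) := (Tuple.sort L).symm with hσ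
  have hmono : StrictMono fun i => L (σ.symm i) :=
    (Tuple.monotone_sort L).strictMono_of_injective (hinj.comp σ.symm.injective)
  have hlt : ∀ i j, L i < L j ↔ σ i < σ j := fun i j => by
    rw [← hmono.lt_iff_lt]
    simp only [Equiv.symm_apply_apply]
    exact Iff.rfl
  have hb : ∀ i, blk J (σ i) = w i := eq_blk_of_sorts hw σ fun a b hab => by
    rcases hab.lt_or_eq with h | rfl
    · obtain ⟨t, h1, h2⟩ := (lex_lt_iff _ _).1 (hmono h)
      simp only [hLapp] at h1 h2
      rcases Nat.eq_zero_or_pos t with rfl | ht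
      · simpa [hrep] using h2.le
      · simpa [hrep] using (h1 0 ht).le
    · exact le_rfl
  set π : Equiv.Perm (Fin n) := (σ.symm.trans (Equiv.addRight (Fin.ofNat n 1))).trans σ with hπ
  have hstep : ∀ t, π (σ (Fin.ofNat n t)) = σ (Fin.ofNat n (t + 1)) := fun t => by
    simp only [hπ, Equiv.trans_apply, Equiv.symm_apply_apply, Equiv.coe_addRight]
    congr 1
    ext
    simp [Fin.val_add]
  have hpow : ∀ k t, (π ^ k) (σ (Fin.ofNat n t)) = σ (Fin.ofNat n (t + k)) := by
    intro k
    induction k with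
    | zero => intro t; simp
    | succ k ih =>
      intro t
      rw [pow_succ', Equiv.Perm.mul_apply, ih, hstep]
      rfl
  have hof : ∀ i : Fin n, Fin.ofNat n i = i := fun i => by simp
  refine ⟨π, σ (Fin.ofNat n 0), ?_, ?_, ?_⟩
  · intro x y
    obtain ⟨i, rfl⟩ := σ.surjective x
    obtain ⟨j, rfl⟩ := σ.surjective y
    refine ⟨n - i + j, ?_⟩
    have h1 := hpow (n - i + j) i
    rw [hof] at h1
    rw [h1]
    congr 1
    ext
    have : (i : ℕ) + (n - i + j) = n + j := by have := i.2; omega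
    rw [this]
    simp [Nat.mod_eq_of_lt j.2]
  · rw [descSet_subset_iff]
    intro x y hxy hlt'
    obtain ⟨i, rfl⟩ := σ.surjective x
    obtain ⟨j, rfl⟩ := σ.surjective y
    rw [hb, hb] at hxy
    conv_lhs => rw [← hof i, hstep]
    conv_rhs => rw [← hof j, hstep]
    rw [← hlt] at hlt' ⊢
    obtain ⟨t, h1, h2⟩ := (lex_lt_iff _ _).1 hlt'
    simp only [hLapp] at h1 h2
    -- the first letters agree, so the first difference occurs at a positive index `t`
    rcases t with _ | t
    · simp only [zero_add, hrep, hxy] at h2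
      exact absurd h2 (lt_irrefl _)
    · have hs : ∀ (i : Fin n) (s : ℕ),
          ofLex (L (Fin.ofNat n (i + 1))) s = rep w (s + 1 + i) := by
        intro i s
        rw [hLapp, ← hmod, Fin.val_ofNat, Nat.add_mod_mod, hmod]
        congr 1
        omega
      refine (lex_lt_iff _ _).2 ⟨t, fun s hst => ?_, ?_⟩
      · rw [hs, hs]
        exact h1 (s + 1) (by omega)
      · rw [hs, hs]
        exact h2
  · funext i
    rw [orbitWord, hpow, zero_add, hof, hb]

open Classical in
/-- Primitive words correspond to pairs of an `n`-cycle and a marked point. -/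
theorem n_mul_alphaC {n : ℕ} [NeZero n] (hn : 2 ≤ n) (J : Finset ℕ) :
    n * alphaC n J = #{w ∈ words n J | Function.minimalPeriod shift (rep w) = n} := by
  have hprod : n * alphaC n J =
      Nat.card ({π : Equiv.Perm (Fin n) // IsFullCycle π ∧ descSet π ⊆ J} × Fin n) := by
    rw [Nat.card_prod, Nat.card_fin, mul_comm, alphaC]
  rw [hprod, ← Nat.card_eq_finsetCard]
  refine Nat.card_eq_of_bijective (fun q => ⟨orbitWord J q.1.1 q.2, mem_filter.2
    ⟨orbitWord_mem_words hn q.1.2.1 _, orbitWord_primitive hn q.1.2.1 q.1.2.2 _⟩⟩) ⟨?_, ?_⟩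
  · rintro ⟨⟨π, h1, h2⟩, x⟩ ⟨⟨ρ, h3, h4⟩, y⟩ h
    obtain ⟨rfl, rfl⟩ := orbitWord_injective hn h1 h2 h3 h4 (Subtype.mk.inj h)
    rfl
  · rintro ⟨w, hw⟩
    obtain ⟨hw, hp⟩ := mem_filter.1 hw
    obtain ⟨π, x, h1, h2, h3⟩ := exists_orbitWord_eq hw hp
    exact ⟨⟨⟨π, h1, h2⟩, x⟩, Subtype.ext h3⟩

/-! ### Periodic words and the Möbius formula -/

theorem card_rep {n d m : ℕ} [NeZero m] (h : n = d * m) (v : Fin m → ℕ) (P : ℕ → Prop)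
    [DecidablePred P] : #{i : Fin n | P (rep v i)} = d * #{j : Fin m | P (v j)} := by
  subst h
  have : #((univ : Finset (Fin d)) ×ˢ ({j : Fin m | P (v j)} : Finset (Fin m))) =
      #{i : Fin (d * m) | P (rep v i)} := card_equiv finProdFinEquiv fun p => by
    have : Fin.ofNat m (finProdFinEquiv p : ℕ) = p.2 := by
      ext
      simp [finProdFinEquiv, Nat.mod_eq_of_lt p.2.2]
    simp only [mem_product, mem_univ, true_and, mem_filter]
    rw [rep, this]
  rw [← this, card_product, card_univ, Fintype.card_fin]

theorem card_div {n d m : ℕ} (h : n = d * m) (P : ℕ → Prop)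
    [DecidablePred P] : #{i : Fin n | P (i / d)} = d * #{j : Fin m | P j} := by
  rw [mul_comm] at h
  subst h
  have : #(({j : Fin m | P j} : Finset (Fin m)) ×ˢ (univ : Finset (Fin d))) =
      #{i : Fin (m * d) | P (i / d)} := card_equiv finProdFinEquiv fun p => by
    have h0 : 0 < d := p.2.pos
    have : (finProdFinEquiv p : ℕ) / d = p.1 := by
      simp [finProdFinEquiv, Nat.add_mul_div_left _ _ h0, Nat.div_eq_of_lt p.2.2]
    simp only [mem_product, mem_univ, and_true, true_and, mem_filter]
    rw [this]
  rw [← this, card_product, card_univ, Fintype.card_fin, mul_comm]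

/-- Rearrangements of the block-index word are recognised by counting letters. -/
theorem mem_words_iff_card {n : ℕ} {J : Finset ℕ} {w : Fin n → ℕ} :
    w ∈ words n J ↔ ∀ c, #{i | w i = c} = #{i : Fin n | blk J i = c} := by
  rw [mem_words]
  constructor
  · rintro ⟨τ, h⟩ c
    refine card_equiv τ fun i => ?_
    simp [h]
  · intro h
    have e : ∀ c, Nonempty ({i // w i = c} ≃ {i : Fin n // blk J i = c}) := fun c =>
      Fintype.card_eq.1 (by rw [Fintype.card_subtype, Fintype.card_subtype, h])
    refine ⟨Equiv.ofFiberEquiv (f := w) (g := fun i : Fin n => blk J i)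
      fun c => Classical.choice (e c), fun i => ?_⟩
    exact (Equiv.ofFiberEquiv_map (f := w) (g := fun i : Fin n => blk J i) _ i).symm

theorem blk_divSet {J : Finset ℕ} {d : ℕ} (hd : 0 < d) (hJ : ∀ t ∈ J, d ∣ t) (i : ℕ) :
    blk (divSet J d) (i / d) = blk J i := by
  unfold blk
  symm
  refine card_nbij (· / d) ?_ ?_ ?_
  · intro t ht
    obtain ⟨h1, h2⟩ := mem_filter.1 ht
    exact mem_filter.2 ⟨mem_image.2 ⟨t, mem_filter.2 ⟨h1, hJ t h1⟩, rfl⟩,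
      Nat.div_le_div_right h2⟩
  · intro s hs t ht h
    simp only [coe_filter, Set.mem_ofPred_eq] at hs ht h
    rw [← Nat.div_mul_cancel (hJ s hs.1), ← Nat.div_mul_cancel (hJ t ht.1), h]
  · intro s hs
    simp only [coe_filter, Set.mem_ofPred_eq, divSet, mem_image, mem_filter, Set.mem_image] at hs ⊢
    obtain ⟨⟨t, ⟨h1, h2⟩, rfl⟩, h3⟩ := hs
    refine ⟨t, ⟨h1, ?_⟩, rfl⟩
    rw [Nat.le_div_iff_mul_le hd, Nat.div_mul_cancel h2] at h3
    exact h3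

theorem rep_rep {n d m : ℕ} [NeZero n] [NeZero m] (h : n = d * m) (v : Fin m → ℕ) :
    rep (fun i : Fin n => rep v i) = rep v := by
  funext t
  have : Fin.ofNat m (t % (d * m)) = Fin.ofNat m t := by
    ext
    simp
  simp only [rep, Fin.val_ofNat, h, this]

theorem rep_fin {n : ℕ} [NeZero n] (w : Fin n → ℕ) (i : Fin n) : rep w i = w i := by simp [rep]

/-- The word `v` repeated `d` times is a rearrangement of the block-index word of `J` exactly when
`J` consists of multiples of `d` and `v` is a rearrangement of the block-index word of `J/d`. -/
theorem rep_mem_words {n d m : ℕ} [NeZero n] [NeZero m] (h : n = d * m) {J : Finset ℕ}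
    (hJ : ∀ t ∈ J, t < n) (v : Fin m → ℕ) :
    (fun i : Fin n => rep v i) ∈ words n J ↔ (∀ t ∈ J, d ∣ t) ∧ v ∈ words m (divSet J d) := by
  have hd : 0 < d := Nat.pos_of_ne_zero (by rintro rfl; exact NeZero.ne n (by simpa using h))
  have key : (∀ t ∈ J, d ∣ t) →
      ((fun i : Fin n => rep v i) ∈ words n J ↔ v ∈ words m (divSet J d)) := by
    intro hdvd
    rw [mem_words_iff_card, mem_words_iff_card]
    refine forall_congr' fun c => ?_
    rw [card_rep h v (· = c)]
    simp only [← blk_divSet hd hdvd]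
    rw [card_div h fun i => blk (divSet J d) i = c]
    exact Nat.mul_right_inj hd.ne'
  refine ⟨fun hw => ?_, fun hw => (key hw.1).2 hw.2⟩
  suffices hdvd : ∀ t ∈ J, d ∣ t from ⟨hdvd, (key hdvd).1 hw⟩
  intro t ht
  -- `t` is the number of positions in the blocks before `t`
  have h1 : #{i : Fin n | blk J i < blk J t} = t := by
    have : ∀ i : Fin n, blk J i < blk J t ↔ i < (⟨t, hJ t ht⟩ : Fin n) := fun i =>
      ⟨fun hlt => (blk_mono J).reflect_lt hlt, fun hlt => blk_lt ht hlt⟩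
    simp only [this, filter_gt_eq_Iio, Fin.card_Iio]
  obtain ⟨τ, hτ⟩ := mem_words.1 hw
  have h2 : #{i : Fin n | rep v i < blk J t} = #{i : Fin n | blk J i < blk J t} :=
    card_equiv τ fun i => by simp [hτ]
  rw [card_rep h v (· < blk J t), h1] at h2
  exact ⟨_, h2.symm⟩

open Classical in
theorem card_periodic_words {n d m : ℕ} [NeZero n] [NeZero m] (h : n = d * m) {J : Finset ℕ}
    (hJ : ∀ t ∈ J, t < n) :
    #{w ∈ words n J | Function.IsPeriodicPt shift m (rep w)} =
      if ∀ t ∈ J, d ∣ t then alphaP m (divSet J d) else 0 := by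
  have himg : {w ∈ words n J | Function.IsPeriodicPt shift m (rep w)} =
      ({v ∈ words m (divSet J d) | ∀ t ∈ J, d ∣ t}).image fun v (i : Fin n) => rep v i := by
    ext w
    simp only [mem_filter, mem_image]
    constructor
    · rintro ⟨hw, hp⟩
      have hv : (fun i : Fin n => rep (fun j : Fin m => rep w j) i) = w := by
        funext i
        have hmod : ∀ q r, rep w (r + m * q) = rep w r := by
          intro q r
          induction q with
          | zero => rfl
          | succ q ih =>
            rw [← ih, ← (isPeriodicPt_iff _ _).1 hp (r + m * q)]
            congr 1
            ring
        rw [← rep_fin w i]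
        conv_rhs => rw [← Nat.mod_add_div (i : ℕ) m, hmod]
        simp [rep]
      have := (rep_mem_words h hJ (fun j : Fin m => rep w j)).1 (by rw [hv]; exact hw)
      exact ⟨_, ⟨this.2, this.1⟩, hv⟩
    · rintro ⟨v, ⟨hv, hdvd⟩, rfl⟩
      refine ⟨(rep_mem_words h hJ v).2 ⟨hdvd, hv⟩, ?_⟩
      rw [rep_rep h]
      exact rep_periodic v
  rw [himg, card_image_of_injective]
  · split_ifs with hdvd
    · rw [filter_true_of_mem fun _ _ => hdvd, alphaP_eq_card_words]
    · rw [filter_false_of_mem fun _ _ => hdvd, card_empty]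
  · intro v v' hv
    have := congrArg rep hv
    simp only [rep_rep h] at this
    funext j
    rw [← rep_fin v, ← rep_fin v', this]

open Classical in
/-- The Möbius formula for the number of `n`-cycles with descent set contained in `J`. -/
theorem n_mul_alphaC_eq_sum {n : ℕ} (hn : 2 ≤ n) {J : Finset ℕ} (hJ : ∀ t ∈ J, t < n) :
    (n : ℤ) * alphaC n J = ∑ d ∈ n.divisors, ArithmeticFunction.moebius d *
      if ∀ t ∈ J, d ∣ t then (alphaP (n / d) (divSet J d) : ℤ) else 0 := by
  have : NeZero n := ⟨by omega⟩
  have h1 := n_mul_alphaC hn J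
  have h2 : (n : ℤ) * alphaC n J =
      ∑ w ∈ words n J, if Function.minimalPeriod shift (rep w) = n then (1 : ℤ) else 0 := by
    rw [sum_boole]
    exact_mod_cast h1
  rw [h2]
  simp only [← sum_moebius_periodic]
  rw [sum_comm]
  refine sum_congr rfl fun d hd => ?_
  rw [← mul_sum, sum_boole]
  have hd' := (Nat.mem_divisors.1 hd).1
  have : NeZero (n / d) := ⟨(Nat.div_pos (Nat.le_of_dvd (by omega) hd')
    (Nat.pos_of_dvd_of_pos hd' (by omega))).ne'⟩
  rw [card_periodic_words (Nat.mul_div_cancel' hd').symm hJ]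
  push_cast
  rfl

/-! ### Inclusion–exclusion and the bound -/

/-- The alternating sum over an interval of the Boolean lattice. -/
theorem sum_interval (D I : Finset ℕ) :
    ∑ J ∈ I.powerset with D ⊆ J, (-1 : ℤ) ^ (#I + #J) = if D = I then 1 else 0 := by
  by_cases hDI : D ⊆ I
  · have : ∑ J ∈ I.powerset with D ⊆ J, (-1 : ℤ) ^ (#I + #J) =
        ∑ K ∈ (I \ D).powerset, (-1 : ℤ) ^ (#I + #D) * (-1) ^ #K := by
      refine sum_nbij' (fun J => J \ D) (fun K => K ∪ D) ?_ ?_ ?_ ?_ ?_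
      · intro J hJ
        obtain ⟨h1, h2⟩ := mem_filter.1 hJ
        exact mem_powerset.2 (sdiff_subset_sdiff (mem_powerset.1 h1) le_rfl)
      · intro K hK
        have hK := mem_powerset.1 hK
        exact mem_filter.2 ⟨mem_powerset.2 (union_subset (hK.trans sdiff_subset) hDI),
          subset_union_right⟩
      · intro J hJ
        exact sdiff_union_of_subset (mem_filter.1 hJ).2
      · intro K hK
        have hK := mem_powerset.1 hK
        exact union_sdiff_cancel_right (disjoint_of_subset_left hK sdiff_disjoint)
      · intro J hJ
        have h := card_sdiff_add_card_eq_card (mem_filter.1 hJ).2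
        rw [← pow_add, ← h, add_comm (#(J \ D)) (#D), add_assoc]
    rw [this, ← mul_sum, sum_powerset_neg_one_pow_card]
    by_cases h : D = I
    · subst h
      simp [← two_mul]
    · have : I \ D ≠ ∅ := fun h' => h (hDI.antisymm (sdiff_eq_empty_iff_subset.1 h'))
      simp [this, h]
  · rw [if_neg (fun h => hDI h.le), filter_false_of_mem, sum_empty]
    intro J hJ h
    exact hDI (h.trans (mem_powerset.1 hJ))

/-- Inclusion–exclusion for a statistic `D` with values in finite sets. -/
theorem inclusion_exclusion {S : Type*} [Fintype S] (D : S → Finset ℕ) (p : S → Prop)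
    (I : Finset ℕ) :
    (Nat.card {s // p s ∧ D s = I} : ℤ) =
      ∑ J ∈ I.powerset, (-1 : ℤ) ^ (#I + #J) * Nat.card {s // p s ∧ D s ⊆ J} := by
  classical
  have h : ∀ q : S → Prop,
      (Nat.card {s // p s ∧ q s} : ℤ) = ∑ s with p s, if q s then 1 else 0 := by
    intro q
    rw [Nat.card_eq_fintype_card, Fintype.card_subtype, ← filter_filter, sum_boole]
  rw [h]
  simp only [h, mul_sum]
  rw [sum_comm]
  refine sum_congr rfl fun s _ => ?_
  have hs := sum_interval (D s) I
  rw [sum_filter] at hs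
  simp only [mul_ite, mul_one, mul_zero]
  convert hs.symm

theorem betaC_eq (n : ℕ) (I : Finset ℕ) :
    (betaC n I : ℤ) = ∑ J ∈ I.powerset, (-1 : ℤ) ^ (#I + #J) * alphaC n J :=
  inclusion_exclusion (S := Equiv.Perm (Fin n)) descSet IsFullCycle I

theorem betaP_eq (n : ℕ) (I : Finset ℕ) :
    (betaP n I : ℤ) = ∑ J ∈ I.powerset, (-1 : ℤ) ^ (#I + #J) * alphaP n J := by
  simpa [betaP, alphaP] using
    inclusion_exclusion (S := Equiv.Perm (Fin n)) descSet (fun _ => True) I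

theorem divSet_one (J : Finset ℕ) : divSet J 1 = J := by simp [divSet]

/-- The contribution of the divisor `d` is, up to sign, a number of permutations of `[m]`. -/
theorem abs_sum_le {d m : ℕ} (hd : 0 < d) (I : Finset ℕ) :
    |∑ J ∈ I.powerset, (-1 : ℤ) ^ (#I + #J) *
      if ∀ t ∈ J, d ∣ t then (alphaP m (divSet J d) : ℤ) else 0| ≤ Nat.factorial m := by
  set I' := {t ∈ I | d ∣ t} with hI'
  have h1 : ∑ J ∈ I.powerset, (-1 : ℤ) ^ (#I + #J) *
      (if ∀ t ∈ J, d ∣ t then (alphaP m (divSet J d) : ℤ) else 0) =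
      (-1) ^ (#I + #I') * ∑ J ∈ I'.powerset, (-1 : ℤ) ^ (#I' + #J) *
        Nat.card {ρ : Equiv.Perm (Fin m) // True ∧ (descSet ρ).image (· * d) ⊆ J} := by
    rw [mul_sum]
    have hp : I'.powerset = {J ∈ I.powerset | ∀ t ∈ J, d ∣ t} := by
      ext J
      simp only [mem_filter, mem_powerset, hI', subset_iff]
      exact forall₂_and
    rw [hp, sum_filter]
    refine sum_congr rfl fun J hJ => ?_
    split_ifs with hdvd
    · have hsgn : (-1 : ℤ) ^ (#I + #J) = (-1) ^ (#I + #I') * (-1) ^ (#I' + #J) := by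
        rw [← pow_add, show #I + #I' + (#I' + #J) = #I + #J + 2 * #I' by ring, pow_add _ (#I + #J),
          pow_mul, neg_one_sq, one_pow, mul_one]
      rw [hsgn, mul_assoc, alphaP]
      congr 3
      refine Nat.card_congr (Equiv.subtypeEquivRight fun ρ => ?_)
      rw [true_and, image_subset_iff, subset_iff]
      refine forall₂_congr fun t _ => ?_
      simp only [divSet, mem_image, mem_filter]
      constructor
      · rintro ⟨s, ⟨h1, h2⟩, rfl⟩
        rwa [Nat.div_mul_cancel h2]
      · intro h
        exact ⟨t * d, ⟨h, Nat.dvd_mul_left d t⟩, Nat.mul_div_cancel t hd⟩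
    · simp
  rw [h1, ← inclusion_exclusion (S := Equiv.Perm (Fin m)), abs_mul, abs_pow, abs_neg, abs_one,
    one_pow, one_mul, Nat.abs_cast, Nat.cast_le]
  refine (Finite.card_subtype_le _).trans ?_
  rw [Nat.card_eq_fintype_card, Fintype.card_perm, Fintype.card_fin]

/-- For `n ≥ 2` and any `I ⊆ [n-1]`, `|n·β^cyc_n(I) - β_n(I)| ≤ (n/2)·⌊n/2⌋!`. -/
theorem abs_n_betaC_sub_betaP_le (n : ℕ) (hn : 2 ≤ n) (I : Finset ℕ)
    (hI : I ⊆ Finset.Ioo 0 n) :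
    |(n : ℚ) * betaC n I - betaP n I| ≤ (n : ℚ) / 2 * (Nat.factorial (n / 2)) := by
  have hsum : (n : ℤ) * betaC n I = ∑ d ∈ n.divisors, ArithmeticFunction.moebius d *
      ∑ J ∈ I.powerset, (-1 : ℤ) ^ (#I + #J) *
        if ∀ t ∈ J, d ∣ t then (alphaP (n / d) (divSet J d) : ℤ) else 0 := by
    simp only [betaC_eq, mul_sum]
    rw [sum_comm]
    refine sum_congr rfl fun J hJ => ?_
    rw [mul_left_comm, n_mul_alphaC_eq_sum hn fun t ht =>
      (mem_Ioo.1 (hI (mem_powerset.1 hJ ht))).2, mul_sum]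
    exact sum_congr rfl fun d _ => mul_left_comm _ _ _
  have hone : 1 ∈ n.divisors := Nat.one_mem_divisors.2 (by omega)
  -- the divisor `d = 1` contributes exactly `betaP n I`
  rw [← add_sum_erase _ _ hone] at hsum
  simp only [ArithmeticFunction.moebius_apply_one, one_mul, one_dvd, implies_true, if_true,
    Nat.div_one, divSet_one, ← betaP_eq] at hsum
  have hcard : #(n.divisors.erase 1) ≤ n / 2 := by
    -- `d ↦ n / d` maps the divisors `d > 1` injectively into `[1, n / 2]`
    calc #(n.divisors.erase 1) ≤ #(Icc 1 (n / 2)) := by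
          refine card_le_card_of_injOn (n / ·) ?_ ?_
          · intro d hd
            obtain ⟨h1, h2⟩ := mem_erase.1 hd
            have h3 := (Nat.mem_divisors.1 h2).1
            have h4 := Nat.pos_of_dvd_of_pos h3 (by omega)
            exact mem_coe.2 (mem_Icc.2 ⟨Nat.div_pos (Nat.le_of_dvd (by omega) h3) h4,
              Nat.div_le_div_left (by omega) (by omega)⟩)
          · intro d hd e he h
            have hd' := (Nat.mem_divisors.1 (mem_erase.1 hd).2).1
            have he' := (Nat.mem_divisors.1 (mem_erase.1 he).2).1
            exact (Nat.div_eq_iff_eq_of_dvd_dvd (by omega) hd' he').1 h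
      _ = n / 2 := by simp
  have hint : |(n : ℤ) * betaC n I - betaP n I| ≤ (n / 2 : ℕ) * Nat.factorial (n / 2) := by
    rw [hsum, add_sub_cancel_left]
    refine (abs_sum_le_sum_abs _ _).trans ?_
    have hterm : ∀ d ∈ n.divisors.erase 1, |ArithmeticFunction.moebius d *
        ∑ J ∈ I.powerset, (-1 : ℤ) ^ (#I + #J) *
          if ∀ t ∈ J, d ∣ t then (alphaP (n / d) (divSet J d) : ℤ) else 0| ≤
        (Nat.factorial (n / 2) : ℤ) := by
      intro d hd
      obtain ⟨h1, h2⟩ := mem_erase.1 hd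
      have h4 := Nat.pos_of_dvd_of_pos (Nat.mem_divisors.1 h2).1 (by omega)
      rw [abs_mul]
      refine (mul_le_of_le_one_left (abs_nonneg _)
        ArithmeticFunction.abs_moebius_le_one).trans ((abs_sum_le h4 I).trans ?_)
      exact_mod_cast Nat.factorial_le (Nat.div_le_div_left (by omega) (by omega))
    refine (sum_le_card_nsmul _ _ _ hterm).trans ?_
    rw [nsmul_eq_mul]
    exact mul_le_mul_of_nonneg_right (by exact_mod_cast hcard) (by positivity)
  have hq : |(n : ℚ) * betaC n I - betaP n I| ≤ ((n / 2 : ℕ) : ℚ) * Nat.factorial (n / 2) := by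
    have := (Int.cast_le (R := ℚ)).2 hint
    push_cast at this ⊢
    exact this
  refine hq.trans (mul_le_mul_of_nonneg_right ?_ (by positivity))
  exact Nat.cast_div_le
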